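/- Let N ≥ 2 and let a_{ij} = a_{ji} ≥ 0 with a_{ii} = 0 define the Laplacian L with l_{ij} = −a_{ij} (i ≠ j) and l_{ii} = Σ_{j≠i} a_{ij}; assume L is positive semidefinite, L·𝟙 = 0, and vᵀLv ≥ λ₂‖v‖² for every v ∈ ℝ^N with 𝟙ᵀv = 0, where λ₂ > 0. Let p_T ∈ ℝ³ be fixed (static target) and let p_i : ℝ → ℝ³ be continuous agent positions with p_i(t) ≠ p_T for all t ≥ t₀; set b_i(t) = (p_T − p_i(t))/‖p_T − p_i(t)‖ and Π_{b_i(t)} = I₃ − b_i(t)·b_i(t)ᵀ. Let the estimates p̂_i : ℝ → ℝ³ satisfy p̂_i′(t) = k₁·(Π_{b_i(t)}·(p_i(t) − p̂_i(t)) − α·Σ_{j=1}^N a_{ij}·(p̂_i(t) − p̂_j(t))) with k₁ > 0. Suppose there exist δ > 0 and γ ∈ (0,1) such that for all t ≥ t₀, (1/N)·Σ_{i=1}^N Π_{b_i(t)} − (δ + γ)·I₃ is positive definite, and α > (δ + 1/γ − 1)/λ₂. Then for all t ≥ t₀, Σ_{i=1}^N ‖p_T − p̂_i(t)‖² ≤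 exp(−2δk₁(t − t₀))·Σ_{i=1}^N ‖p_T − p̂_i(t₀)‖². -/

import Mathlib

/-!
Write `e i = pT - phat i` for the estimation errors. Since `Pr i t` annihilates `pT - p i t`, they
obey `e i' = -k₁ (Π i e i + α ∑ j, a i j (e i - e j))`, so `V = ∑ i, ‖e i‖²` has derivative
`-2 k₁ (∑ i, e iᵀ Π i e i + α ∑ l, (e · l)ᵀ L (e · l))`, and it suffices that the bracket is at
least `δ V` (`dissipation`): then `exp (2 δ k₁ t) V t` is nonincreasing.

For that bound, split `e i = m + d i` with `m` the mean. The Laplacian term only sees `d` and is at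
least `lam2 ∑ i, ‖d i‖²` (`laplacian_form_ge`). For the projection term, Young's inequality for the
semidefinite forms `Π i` (`projForm_young`) gives
`e iᵀ Π i e i ≥ (1 - γ) mᵀ Π i m - (1 / γ - 1) ‖d i‖²`. With `S = ∑ i, mᵀ Π i m`, excitation gives
`S ≥ N (δ + γ) ‖m‖²`, while `Π i ≤ I` gives `S ≤ N ‖m‖²`, whence `(1 - γ) S ≥ N δ ‖m‖²`. The
condition on `α` absorbs the remaining multiple of `∑ i, ‖d i‖²`.
-/

open Matrix

/-- The quadratic form `xᵀ (I - b bᵀ) x` on `ℝ³`. -/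
def projForm (b x : Fin 3 → ℝ) : ℝ := x ⬝ᵥ x - (b ⬝ᵥ x) ^ 2

lemma projForm_nonneg (b x : Fin 3 → ℝ) (hb : b ⬝ᵥ b ≤ 1) : 0 ≤ projForm b x := by
  have hx : 0 ≤ x ⬝ᵥ x := Finset.sum_nonneg fun l _ => mul_self_nonneg (x l)
  have hcs : (b ⬝ᵥ x) ^ 2 ≤ (b ⬝ᵥ b) * (x ⬝ᵥ x) := by
    simpa [dotProduct, pow_two] using Finset.sum_mul_sq_le_sq_mul_sq Finset.univ b x
  unfold projForm
  nlinarith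

lemma projForm_le (b x : Fin 3 → ℝ) : projForm b x ≤ x ⬝ᵥ x := by
  unfold projForm
  nlinarith [sq_nonneg (b ⬝ᵥ x)]

lemma projForm_young (b m d : Fin 3 → ℝ) (hb : b ⬝ᵥ b ≤ 1) (γ : ℝ) (hγ0 : 0 < γ) (hγ1 : γ < 1) :
    (1 - γ) * projForm b m - (1 / γ - 1) * (d ⬝ᵥ d) ≤ projForm b (m + d) := by
  have h1 := projForm_le b d
  have h2 : 0 ≤ 1 / γ * projForm b (γ • m + d) :=
    mul_nonneg (by positivity) (projForm_nonneg b _ hb)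
  have h3 : projForm b (m + d) - (1 - γ) * projForm b m + (1 / γ - 1) * projForm b d
      = 1 / γ * projForm b (γ • m + d) := by
    simp only [projForm, dotProduct, Fin.sum_univ_three, Pi.add_apply, Pi.smul_apply, smul_eq_mul]
    field_simp
    ring
  have h4 : 0 ≤ 1 / γ - 1 := by
    rw [sub_nonneg, le_div_iff₀ hγ0]; linarith
  nlinarith [mul_le_mul_of_nonneg_left h1 h4]

lemma dotProduct_proj (b x : Fin 3 → ℝ) :
    x ⬝ᵥ ((1 - vecMulVec b b) *ᵥ x) = projForm b x := by
  simp only [projForm, dotProduct, mulVec, vecMulVec, Fin.sum_univ_three, Matrix.sub_apply,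
    Matrix.one_apply, Matrix.of_apply]
  simp
  ring

lemma sum_adj_diff_eq_zero {N : ℕ} (a : Fin N → Fin N → ℝ) (ha : ∀ i j, a i j = a j i)
    (v : Fin N → ℝ) : ∑ i, ∑ j, a i j * (v i - v j) = 0 := by
  have h : ∑ i, ∑ j, a i j * (v i - v j) = -∑ i, ∑ j, a i j * (v i - v j) := by
    conv_lhs => rw [Finset.sum_comm]
    simp only [← Finset.sum_neg_distrib]
    refine Finset.sum_congr rfl fun i _ => Finset.sum_congr rfl fun j _ => ?_
    rw [ha j i]; ring
  linarith

lemma laplacian_form_ge {N : ℕ} (a : Fin N → Fin N → ℝ) (ha_symm : ∀ i j, a i j = a j i)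
    (L : Matrix (Fin N) (Fin N) ℝ)
    (hL : ∀ i j, L i j = if i = j then ∑ l, a i l else -(a i j))
    (hL1 : L *ᵥ (fun _ => (1 : ℝ)) = 0) (lam2 : ℝ)
    (hfiedler : ∀ v : Fin N → ℝ, (∑ i, v i) = 0 →
      lam2 * (∑ i, v i ^ 2) ≤ v ⬝ᵥ (L *ᵥ v))
    (m : ℝ) (d : Fin N → ℝ) (hd : ∑ i, d i = 0) :
    lam2 * (∑ i, d i ^ 2) ≤ ∑ i, (m + d i) * ∑ j, a i j * ((m + d i) - (m + d j)) := by
  have hLd : ∀ i, (L *ᵥ d) i = ∑ j, a i j * (d i - d j) := by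
    intro i
    have h1 : ∑ j, L i j = 0 := by
      simpa [mulVec, dotProduct] using congrFun hL1 i
    have h2 : (L *ᵥ d) i = ∑ j, L i j * (d j - d i) := by
      simp only [mulVec, dotProduct, mul_sub, Finset.sum_sub_distrib, ← Finset.sum_mul, h1]
      simp
    rw [h2]
    refine Finset.sum_congr rfl fun j _ => ?_
    by_cases hij : i = j
    · subst hij; simp
    · rw [hL, if_neg hij]; ring
  have h := hfiedler d hd
  simp only [dotProduct, hLd] at h
  have h0 := sum_adj_diff_eq_zero a ha_symm d
  simp only [add_sub_add_left_eq_sub, add_mul, Finset.sum_add_distrib, ← Finset.mul_sum, h0]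
  linarith

/-- The pointwise-in-time inequality `V' ≤ -2 δ k₁ V`, up to the factor `-2 k₁`. -/
lemma dissipation {N : ℕ} (hN : 2 ≤ N) (a : Fin N → Fin N → ℝ) (ha_symm : ∀ i j, a i j = a j i)
    (L : Matrix (Fin N) (Fin N) ℝ)
    (hL : ∀ i j, L i j = if i = j then ∑ l, a i l else -(a i j))
    (hL1 : L *ᵥ (fun _ => (1 : ℝ)) = 0) (lam2 : ℝ) (hlam2 : 0 < lam2)
    (hfiedler : ∀ v : Fin N → ℝ, (∑ i, v i) = 0 →
      lam2 * (∑ i, v i ^ 2) ≤ v ⬝ᵥ (L *ᵥ v))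
    (b : Fin N → Fin 3 → ℝ) (hb : ∀ i, b i ⬝ᵥ b i ≤ 1)
    (α δ γ : ℝ) (hδ : 0 < δ) (hγ0 : 0 < γ) (hγ1 : γ < 1)
    (hexc : ∀ m : Fin 3 → ℝ, N * (δ + γ) * (m ⬝ᵥ m) ≤ ∑ i, projForm (b i) m)
    (hα : (δ + 1 / γ - 1) / lam2 < α) (e : Fin N → Fin 3 → ℝ) :
    δ * (∑ i, ∑ l, e i l ^ 2) ≤
      ∑ i, projForm (b i) (e i) + α * ∑ l, ∑ i, e i l * ∑ j, a i j * (e i l - e j l) := by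
  have hN0 : (N : ℝ) ≠ 0 := by positivity
  obtain ⟨m, hm⟩ : ∃ m : Fin 3 → ℝ, ∀ l, m l = (N : ℝ)⁻¹ * ∑ i, e i l := ⟨_, fun _ => rfl⟩
  obtain ⟨d, rfl⟩ : ∃ d : Fin N → Fin 3 → ℝ, e = fun i => m + d i :=
    ⟨fun i => e i - m, by funext i; simp⟩
  have hd : ∀ l, ∑ i, d i l = 0 := by
    intro l
    have h := hm l
    simp only [Pi.add_apply, Finset.sum_add_distrib, Finset.sum_const, Finset.card_univ,
      Fintype.card_fin, nsmul_eq_mul] at h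
    field_simp at h
    linarith
  set D := ∑ i, d i ⬝ᵥ d i with hD
  have hD0 : 0 ≤ D := Finset.sum_nonneg fun i _ => Finset.sum_nonneg fun l _ => mul_self_nonneg _
  have hDl : ∑ l, ∑ i, d i l ^ 2 = D := by
    rw [Finset.sum_comm]; simp only [hD, dotProduct, pow_two]
  have hV : ∑ i, ∑ l, (m + d i) l ^ 2 = N * (m ⬝ᵥ m) + D := by
    have h1 : ∀ l, ∑ i, (m + d i) l ^ 2 = N * (m l * m l) + ∑ i, d i l ^ 2 := by
      intro l
      have : ∀ i, (m + d i) l ^ 2 = m l * m l + 2 * m l * d i l + d i l ^ 2 := by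
        intro i; simp only [Pi.add_apply]; ring
      simp only [this, Finset.sum_add_distrib, ← Finset.mul_sum, hd]
      simp [mul_left_comm]
    rw [Finset.sum_comm]
    simp only [h1, Finset.sum_add_distrib, ← Finset.mul_sum, hDl]
    rfl
  have hlap : lam2 * D ≤ ∑ l, ∑ i, (m + d i) l * ∑ j, a i j * ((m + d i) l - (m + d j) l) := by
    rw [← hDl, Finset.mul_sum]
    exact Finset.sum_le_sum fun l _ =>
      laplacian_form_ge a ha_symm L hL hL1 lam2 hfiedler (m l) (fun i => d i l) (hd l)
  set S := ∑ i, projForm (b i) m with hS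
  have hproj : (1 - γ) * S - (1 / γ - 1) * D ≤ ∑ i, projForm (b i) (m + d i) := by
    rw [hS, hD, Finset.mul_sum, Finset.mul_sum, ← Finset.sum_sub_distrib]
    exact Finset.sum_le_sum fun i _ => projForm_young (b i) m (d i) (hb i) γ hγ0 hγ1
  have hSle : S ≤ N * (m ⬝ᵥ m) := by
    calc S ≤ ∑ _i : Fin N, m ⬝ᵥ m := Finset.sum_le_sum fun i _ => projForm_le (b i) m
      _ = N * (m ⬝ᵥ m) := by simp
  have hSge := hexc m
  rw [div_lt_iff₀ hlam2] at hα
  have hγinv : 1 < 1 / γ := by rw [lt_div_iff₀ hγ0]; linarith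
  have hαpos : 0 < α := by
    have : 0 < α * lam2 := by linarith
    exact pos_of_mul_pos_left this hlam2.le
  rw [hV]
  nlinarith [mul_le_mul_of_nonneg_left hlap hαpos.le, mul_le_mul_of_nonneg_left hSle hγ0.le,
    mul_le_mul_of_nonneg_right hα.le hD0]

/-- the `M = 1` practical example of the paper: distributed
bearing-only localization of a static target, with explicit exponential rate `δk₁`. -/
theorem static_target_bearing_observer (N : ℕ) (hN : 2 ≤ N)
    (a : Fin N → Fin N → ℝ) (ha_symm : ∀ i j, a i j = a j i)
    (ha_nonneg : ∀ i j, 0 ≤ a i j) (ha_diag : ∀ i, a i i = 0)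
    (L : Matrix (Fin N) (Fin N) ℝ)
    (hL : ∀ i j, L i j = if i = j then ∑ l, a i l else -(a i j))
    (hLpsd : L.PosSemidef) (hL1 : L *ᵥ (fun _ => (1 : ℝ)) = 0)
    (lam2 : ℝ) (hlam2 : 0 < lam2)
    (hfiedler : ∀ v : Fin N → ℝ, (∑ i, v i) = 0 →
      lam2 * (∑ i, v i ^ 2) ≤ v ⬝ᵥ (L *ᵥ v))
    (t₀ : ℝ)
    -- static target and continuous agent positions
    (pT : Fin 3 → ℝ) (p : Fin N → ℝ → Fin 3 → ℝ)
    (hp_cont : ∀ i, Continuous (p i))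
    (hp_ne : ∀ (i : Fin N) (t : ℝ), t₀ ≤ t → p i t ≠ pT)
    -- bearings and associated orthogonal projection matrices
    (b : Fin N → ℝ → Fin 3 → ℝ)
    (hb : ∀ i t l, b i t l =
      (pT l - p i t l) / Real.sqrt (∑ l', (pT l' - p i t l') ^ 2))
    (Pr : Fin N → ℝ → Matrix (Fin 3) (Fin 3) ℝ)
    (hPr : ∀ i t, Pr i t = 1 - Matrix.vecMulVec (b i t) (b i t))
    -- the distributed observer
    (k₁ α : ℝ) (hk₁ : 0 < k₁)
    (phat : Fin N → ℝ → Fin 3 → ℝ)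
    (hobs : ∀ (i : Fin N) (t : ℝ), HasDerivAt (fun s => phat i s)
      (k₁ • ((Pr i t) *ᵥ (p i t - phat i t)
        - α • ∑ j, a i j • (phat i t - phat j t))) t)
    -- spatial excitation and consensus-gain conditions
    (δ γ : ℝ) (hδ : 0 < δ) (hγ0 : 0 < γ) (hγ1 : γ < 1)
    (hexc : ∀ t, t₀ ≤ t →
      (((N : ℝ))⁻¹ • (∑ i, Pr i t) - (δ + γ) • (1 : Matrix (Fin 3) (Fin 3) ℝ)).PosDef)
    (hα : (δ + 1 / γ - 1) / lam2 < α) :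
    ∀ t, t₀ ≤ t →
      (∑ i : Fin N, ∑ l : Fin 3, (pT l - phat i t l) ^ 2)
        ≤ Real.exp (-(2 * δ * k₁) * (t - t₀)) *
          (∑ i : Fin N, ∑ l : Fin 3, (pT l - phat i t₀ l) ^ 2) := by
  have hunit : ∀ i t, t₀ ≤ t → b i t ⬝ᵥ b i t = 1 ∧
      (1 - vecMulVec (b i t) (b i t)) *ᵥ (pT - p i t) = 0 := by
    intro i t ht
    set r := Real.sqrt (∑ l', (pT l' - p i t l') ^ 2) with hr
    have hpos : 0 < ∑ l', (pT l' - p i t l') ^ 2 := by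
      obtain ⟨l, hl⟩ := Function.ne_iff.mp (hp_ne i t ht)
      exact Finset.sum_pos' (fun _ _ => sq_nonneg _)
        ⟨l, Finset.mem_univ _, by have := sub_ne_zero.mpr hl.symm; positivity⟩
    have hr0 : r ≠ 0 := (Real.sqrt_pos.mpr hpos).ne'
    have hu : pT - p i t = r • b i t := by
      funext l
      simp only [Pi.sub_apply, Pi.smul_apply, smul_eq_mul, hb, ← hr]
      field_simp
    have hbb : b i t ⬝ᵥ b i t = 1 := by
      have hrr : r ^ 2 = ∑ l', (pT l' - p i t l') ^ 2 := Real.sq_sqrt hpos.le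
      have h2 : ∑ l', (pT l' - p i t l') ^ 2 = r ^ 2 * (b i t ⬝ᵥ b i t) := by
        rw [dotProduct, Finset.mul_sum]
        refine Finset.sum_congr rfl fun l _ => ?_
        have := congrFun hu l
        simp only [Pi.sub_apply, Pi.smul_apply, smul_eq_mul] at this
        rw [this]; ring
      rw [← hrr] at h2
      exact (mul_right_eq_self₀.mp h2.symm).resolve_right (pow_ne_zero 2 hr0)
    refine ⟨hbb, ?_⟩
    rw [hu, mulVec_smul, sub_mulVec, one_mulVec, vecMulVec_mulVec, hbb]
    simp
  have hN0 : (0 : ℝ) < N := by positivity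
  have hexc' : ∀ t, t₀ ≤ t → ∀ m : Fin 3 → ℝ,
      N * (δ + γ) * (m ⬝ᵥ m) ≤ ∑ i, projForm (b i t) m := by
    intro t ht m
    have h := (hexc t ht).posSemidef.dotProduct_mulVec_nonneg m
    simp only [star_trivial, sub_mulVec, smul_mulVec, one_mulVec, sum_mulVec, dotProduct_sub,
      dotProduct_smul, dotProduct_sum, hPr] at h
    have h' : 0 ≤ (N : ℝ)⁻¹ * ∑ i, projForm (b i t) m - (δ + γ) * (m ⬝ᵥ m) := by
      simpa [← dotProduct_proj, sub_mulVec] using h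
    have h2 := mul_nonneg hN0.le h'
    rw [mul_sub, mul_inv_cancel_left₀ hN0.ne'] at h2
    linarith
  set V : ℝ → ℝ := fun t => ∑ i : Fin N, ∑ l : Fin 3, (pT l - phat i t l) ^ 2 with hVdef
  set W : ℝ → ℝ := fun t => ∑ i : Fin N, ∑ l : Fin 3, 2 * (pT l - phat i t l) *
    -(k₁ • ((Pr i t) *ᵥ (p i t - phat i t) - α • ∑ j, a i j • (phat i t - phat j t))) l with hWdef
  have hVderiv : ∀ t, HasDerivAt V (W t) t := by
    intro t
    refine HasDerivAt.fun_sum fun i _ => HasDerivAt.fun_sum fun l _ => ?_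
    simpa using (((hasDerivAt_pi.mp (hobs i t)) l).const_sub (pT l)).fun_pow 2
  have hWle : ∀ t, t₀ ≤ t → W t ≤ -(2 * δ * k₁) * V t := by
    intro t ht
    have hdis := dissipation hN a ha_symm L hL hL1 lam2 hlam2 hfiedler (fun i => b i t)
      (fun i => (hunit i t ht).1.le) α δ γ hδ hγ0 hγ1 (hexc' t ht) hα (fun i => pT - phat i t)
    have hW : W t = -(2 * k₁) * (∑ i, projForm (b i t) (pT - phat i t) +
        α * ∑ l, ∑ i, (pT - phat i t) l *
          ∑ j, a i j * ((pT - phat i t) l - (pT - phat j t) l)) := by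
      rw [Finset.sum_comm (s := (Finset.univ : Finset (Fin 3))), Finset.mul_sum,
        ← Finset.sum_add_distrib, Finset.mul_sum]
      refine Finset.sum_congr rfl fun i _ => ?_
      have hpr : Pr i t *ᵥ (p i t - phat i t) =
          (1 - vecMulVec (b i t) (b i t)) *ᵥ (pT - phat i t) := by
        have hsplit : p i t - phat i t = (pT - phat i t) - (pT - p i t) := by abel
        rw [hPr, hsplit, mulVec_sub, (hunit i t ht).2, sub_zero]
      rw [hpr, ← dotProduct_proj, dotProduct, Finset.mul_sum, ← Finset.sum_add_distrib,
        Finset.mul_sum]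
      refine Finset.sum_congr rfl fun l _ => ?_
      have hcons : (∑ j, a i j • (phat i t - phat j t)) l =
          -∑ j, a i j * ((pT - phat i t) l - (pT - phat j t) l) := by
        rw [Finset.sum_apply, ← Finset.sum_neg_distrib]
        refine Finset.sum_congr rfl fun j _ => ?_
        simp only [Pi.smul_apply, Pi.sub_apply, smul_eq_mul]
        ring
      simp only [Pi.smul_apply, Pi.sub_apply, smul_eq_mul] at hcons ⊢
      rw [hcons]
      ring
    rw [hW]
    have hVt : V t = ∑ i, ∑ l, (pT - phat i t) l ^ 2 := rfl
    rw [hVt]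
    nlinarith [mul_le_mul_of_nonneg_left hdis hk₁.le]
  -- `exp (2 δ k₁ s) V s` is nonincreasing on `[t₀, ∞)`.
  have hFderiv : ∀ t, HasDerivAt (fun s => Real.exp (2 * δ * k₁ * s) * V s)
      (Real.exp (2 * δ * k₁ * t) * (2 * δ * k₁) * V t + Real.exp (2 * δ * k₁ * t) * W t) t := by
    intro t
    have h1 : HasDerivAt (fun s => 2 * δ * k₁ * s) (2 * δ * k₁) t := by
      simpa using (hasDerivAt_id t).const_mul (2 * δ * k₁)
    exact h1.exp.mul (hVderiv t)
  have hanti : AntitoneOn (fun s => Real.exp (2 * δ * k₁ * s) * V s) (Set.Ici t₀) := by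
    refine antitoneOn_of_deriv_nonpos (convex_Ici t₀)
      (fun s _ => (hFderiv s).continuousAt.continuousWithinAt)
      (fun s _ => (hFderiv s).differentiableAt.differentiableWithinAt) fun s hs => ?_
    rw [interior_Ici] at hs
    rw [(hFderiv s).deriv]
    nlinarith [mul_le_mul_of_nonneg_left (hWle s (le_of_lt hs)) (Real.exp_pos (2 * δ * k₁ * s)).le]
  intro t ht
  have h : Real.exp (2 * δ * k₁ * t) * V t ≤ Real.exp (2 * δ * k₁ * t₀) * V t₀ :=
    hanti Set.self_mem_Ici ht ht
  change V t ≤ Real.exp (-(2 * δ * k₁) * (t - t₀)) * V t₀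
  have hexp : Real.exp (-(2 * δ * k₁) * (t - t₀)) =
      Real.exp (2 * δ * k₁ * t₀) / Real.exp (2 * δ * k₁ * t) := by
    rw [← Real.exp_sub]; congr 1; ring
  rw [hexp, div_mul_eq_mul_div, le_div_iff₀ (Real.exp_pos _)]
  linarith
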